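/- If θ is an angle function for α, then for all (s, v): φ_ss(s,v) = (−v·f′(s) + f(s)·cos θ(s))·N(s) − v·(f(s)² + g(s)²)·C(s) + v·g′(s)·W(s), and φ_sv(s,v) = −f(s)·N(s) + g(s)·W(s). -/

import Mathlib

open RealInnerProductSpace

/-- Cross product on `EuclideanSpace ℝ (Fin 3)`. -/
noncomputable def cross3 (u v : EuclideanSpace ℝ (Fin 3)) : EuclideanSpace ℝ (Fin 3) :=
  (EuclideanSpace.equiv (Fin 3) ℝ).symm
    (crossProduct ((EuclideanSpace.equiv (Fin 3) ℝ) u) ((EuclideanSpace.equiv (Fin 3) ℝ) v))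

/-- Determinant of the 3×3 matrix whose rows are the given vectors. -/
noncomputable def det3 (u v w : EuclideanSpace ℝ (Fin 3)) : ℝ :=
  Matrix.det (Matrix.of ![(EuclideanSpace.equiv (Fin 3) ℝ) u,
    (EuclideanSpace.equiv (Fin 3) ℝ) v, (EuclideanSpace.equiv (Fin 3) ℝ) w])

local notation "E3" => EuclideanSpace ℝ (Fin 3)

lemma cross3_apply_zero (u v : E3) : cross3 u v 0 = u 1 * v 2 - u 2 * v 1 := by
  simp [cross3, crossProduct]

lemma cross3_apply_one (u v : E3) : cross3 u v 1 = u 2 * v 0 - u 0 * v 2 := by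
  simp [cross3, crossProduct]

lemma cross3_apply_two (u v : E3) : cross3 u v 2 = u 0 * v 1 - u 1 * v 0 := by
  simp [cross3, crossProduct]

lemma real_inner_eq_sum_three (u v : E3) : ⟪u, v⟫ = u 0 * v 0 + u 1 * v 1 + u 2 * v 2 := by
  simp [PiLp.inner_apply, Fin.sum_univ_three, mul_comm]

lemma ext_three {u v : E3} (h0 : u 0 = v 0) (h1 : u 1 = v 1) (h2 : u 2 = v 2) : u = v := by
  ext i
  fin_cases i
  exacts [h0, h1, h2]

lemma ContDiff.cross3 {n : WithTop ℕ∞} {u v : ℝ → E3} (hu : ContDiff ℝ n u)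
    (hv : ContDiff ℝ n v) : ContDiff ℝ n fun s => cross3 (u s) (v s) := by
  rw [contDiff_euclidean] at *
  intro i
  have := hu 0
  have := hu 1
  have := hu 2
  have := hv 0
  have := hv 1
  have := hv 2
  fin_cases i
  · simp only [Fin.zero_eta, cross3_apply_zero]
    fun_prop
  · simp only [Fin.mk_one, cross3_apply_one]
    fun_prop
  · simp only [Fin.reduceFinMk, cross3_apply_two]
    fun_prop

lemma HasDerivAt.euclidean_apply {u : ℝ → E3} {u' : E3} {s : ℝ} (hu : HasDerivAt u u' s)
    (i : Fin 3) : HasDerivAt (fun t => u t i) (u' i) s :=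
  (EuclideanSpace.proj i : E3 →L[ℝ] ℝ).hasFDerivAt.comp_hasDerivAt s hu

lemma HasDerivAt.cross3 {u v : ℝ → E3} {u' v' : E3} {s : ℝ} (hu : HasDerivAt u u' s)
    (hv : HasDerivAt v v' s) :
    HasDerivAt (fun t => cross3 (u t) (v t)) (cross3 u' (v s) + cross3 (u s) v') s := by
  have key : HasDerivAt (fun t => EuclideanSpace.equiv (Fin 3) ℝ (_root_.cross3 (u t) (v t)))
      (EuclideanSpace.equiv (Fin 3) ℝ (_root_.cross3 u' (v s) + _root_.cross3 (u s) v')) s := by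
    refine hasDerivAt_pi.2 fun i => ?_
    have aux : ∀ j k, HasDerivAt (fun t => u t j * v t k - u t k * v t j)
        (u' j * v s k + u s j * v' k - (u' k * v s j + u s k * v' j)) s := fun j k =>
      ((hu.euclidean_apply j).mul (hv.euclidean_apply k)).sub
        ((hu.euclidean_apply k).mul (hv.euclidean_apply j))
    fin_cases i
    · refine ((aux 1 2).congr_deriv ?_).congr_of_eventuallyEq
        (.of_forall fun t => cross3_apply_zero _ _)
      change _ = (_root_.cross3 u' (v s) + _root_.cross3 (u s) v') 0
      rw [PiLp.add_apply, cross3_apply_zero, cross3_apply_zero]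
      ring
    · refine ((aux 2 0).congr_deriv ?_).congr_of_eventuallyEq
        (.of_forall fun t => cross3_apply_one _ _)
      change _ = (_root_.cross3 u' (v s) + _root_.cross3 (u s) v') 1
      rw [PiLp.add_apply, cross3_apply_one, cross3_apply_one]
      ring
    · refine ((aux 0 1).congr_deriv ?_).congr_of_eventuallyEq
        (.of_forall fun t => cross3_apply_two _ _)
      change _ = (_root_.cross3 u' (v s) + _root_.cross3 (u s) v') 2
      rw [PiLp.add_apply, cross3_apply_two, cross3_apply_two]
      ring
  exact (EuclideanSpace.equiv (Fin 3) ℝ).symm.hasFDerivAt.comp_hasDerivAt s key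

lemma inner_cross3_left (u v : E3) : ⟪u, cross3 u v⟫ = 0 := by
  rw [real_inner_eq_sum_three, cross3_apply_zero, cross3_apply_one, cross3_apply_two]
  ring

lemma inner_cross3_right (u v : E3) : ⟪v, cross3 u v⟫ = 0 := by
  rw [real_inner_eq_sum_three, cross3_apply_zero, cross3_apply_one, cross3_apply_two]
  ring

lemma inner_cross3_self (u v : E3) :
    ⟪cross3 u v, cross3 u v⟫ = ⟪u, u⟫ * ⟪v, v⟫ - ⟪u, v⟫ ^ 2 := by
  simp only [real_inner_eq_sum_three, cross3_apply_zero, cross3_apply_one, cross3_apply_two]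
  ring

/-- If `u, v` are orthonormal, then any vector expands in the frame `u, v, u × v`. -/
lemma eq_sum_inner_frame {u v : E3} (hu : ⟪u, u⟫ = 1) (hv : ⟪v, v⟫ = 1) (huv : ⟪u, v⟫ = 0)
    (x : E3) : x = ⟪u, x⟫ • u + ⟪v, x⟫ • v + ⟪cross3 u v, x⟫ • cross3 u v := by
  have hw : ⟪cross3 u v, cross3 u v⟫ = 1 := by rw [inner_cross3_self, hu, hv, huv]; norm_num
  have hon : Orthonormal ℝ ![u, v, cross3 u v] := by
    rw [orthonormal_iff_ite]
    intro i j
    fin_cases i <;> fin_cases j <;>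
      simp [hu, hv, hw, huv, inner_cross3_left, inner_cross3_right, real_inner_comm u,
        real_inner_comm v, -inner_self_eq_norm_sq_to_K]
  have hspan := hon.linearIndependent.span_eq_top_of_card_eq_finrank' (by simp)
  have := (OrthonormalBasis.mk hon hspan.ge).sum_repr' x
  simpa [Fin.sum_univ_three] using this.symm

/-- Derivative of the binormal, given the Frenet equations for the tangent and the normal. -/
lemma cross3_frenet {u v : E3} (hu : ⟪u, u⟫ = 1) (huv : ⟪u, v⟫ = 0) (k t : ℝ) :
    cross3 (k • v) v + cross3 u ((-k) • u + t • cross3 u v) = (-t) • v := by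
  rw [real_inner_eq_sum_three] at hu huv
  apply ext_three <;>
    simp only [PiLp.add_apply, PiLp.smul_apply, smul_eq_mul, cross3_apply_zero, cross3_apply_one,
      cross3_apply_two]
  · linear_combination t * u 0 * huv - t * v 0 * hu
  · linear_combination t * u 1 * huv - t * v 1 * hu
  · linear_combination t * u 2 * huv - t * v 2 * hu

lemma inner_deriv_add_inner_deriv_eq_zero {u v : ℝ → E3} {u' v' : E3} {s c : ℝ}
    (hu : HasDerivAt u u' s) (hv : HasDerivAt v v' s) (h : ∀ t, ⟪u t, v t⟫ = c) :
    ⟪u s, v'⟫ + ⟪u', v s⟫ = 0 :=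
  (hu.inner ℝ hv).unique (by simpa only [h] using hasDerivAt_const s c)

theorem stmt_9
    (α : ℝ → EuclideanSpace ℝ (Fin 3))
    (hα : ContDiff ℝ (⊤ : ℕ∞) α)
    (hunit : ∀ s, ‖deriv α s‖ = 1)
    (T : ℝ → EuclideanSpace ℝ (Fin 3)) (hT : ∀ s, T s = deriv α s)
    (κ : ℝ → ℝ) (hκ : ∀ s, κ s = ‖deriv (deriv α) s‖) (hκpos : ∀ s, 0 < κ s)
    (N : ℝ → EuclideanSpace ℝ (Fin 3)) (hN : ∀ s, N s = (κ s)⁻¹ • deriv (deriv α) s)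
    (B : ℝ → EuclideanSpace ℝ (Fin 3)) (hB : ∀ s, B s = cross3 (T s) (N s))
    (τ : ℝ → ℝ) (hτ : ∀ s, τ s = ⟪deriv N s, B s⟫)
    (f : ℝ → ℝ) (hf : ∀ s, f s = Real.sqrt (κ s ^ 2 + τ s ^ 2))
    (g : ℝ → ℝ) (hg : ∀ s, g s = κ s ^ 2 / (κ s ^ 2 + τ s ^ 2) * deriv (fun u => τ u / κ u) s)
    (C : ℝ → EuclideanSpace ℝ (Fin 3))
    (hC : ∀ s, C s = (Real.sqrt (κ s ^ 2 + τ s ^ 2))⁻¹ • ((-κ s) • T s + τ s • B s))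
    (W : ℝ → EuclideanSpace ℝ (Fin 3))
    (hW : ∀ s, W s = (Real.sqrt (κ s ^ 2 + τ s ^ 2))⁻¹ • (τ s • T s + κ s • B s))
    (θ : ℝ → ℝ) (hθdiff : Differentiable ℝ θ)
    (hθderiv : ∀ s, deriv θ s = g s)
    (hθκ : ∀ s, κ s = f s * Real.cos (θ s))
    (hθτ : ∀ s, τ s = f s * Real.sin (θ s))
    (φs φv : ℝ → ℝ → EuclideanSpace ℝ (Fin 3))
    (hφs : ∀ s v, φs s v = deriv (fun u => α u + v • C u) s)
    (hφv : ∀ s v, φv s v = deriv (fun w => α s + w • C s) v)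
    (φss φsv φvv : ℝ → ℝ → EuclideanSpace ℝ (Fin 3))
    (hφss : ∀ s v, φss s v = deriv (fun u => φs u v) s)
    (hφsv : ∀ s v, φsv s v = deriv (fun u => φv u v) s)
    (hφvv : ∀ s v, φvv s v = deriv (fun w => φv s w) v) :
    ∀ (s v : ℝ),
      φss s v = (-(v * deriv f s) + f s * Real.cos (θ s)) • N s +
        (-(v * (f s ^ 2 + g s ^ 2))) • C s + (v * deriv g s) • W s ∧
      φsv s v = (-f s) • N s + g s • W s := by
  have hnorm : ∀ s, deriv (deriv α) s ≠ 0 := fun s h => by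
    have := hκpos s
    simp [hκ, h] at this
  have hT' : T = deriv α := funext hT
  have cT : ContDiff ℝ (⊤ : ℕ∞) T := hT' ▸ (contDiff_infty_iff_deriv.1 hα).2
  have cT' : ContDiff ℝ (⊤ : ℕ∞) (deriv (deriv α)) := hT' ▸ (contDiff_infty_iff_deriv.1 cT).2
  have cκ : ContDiff ℝ (⊤ : ℕ∞) κ := funext hκ ▸ cT'.norm ℝ hnorm
  have cN : ContDiff ℝ (⊤ : ℕ∞) N := funext hN ▸ (cκ.inv fun s => (hκpos s).ne').smul cT'
  have cB : ContDiff ℝ (⊤ : ℕ∞) B := funext hB ▸ cT.cross3 cN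
  have cτ : ContDiff ℝ (⊤ : ℕ∞) τ :=
    funext hτ ▸ (contDiff_infty_iff_deriv.1 cN).2.inner ℝ cB
  have hpos : ∀ s, 0 < κ s ^ 2 + τ s ^ 2 := fun s => by have := hκpos s; positivity
  have hfpos : ∀ s, 0 < f s := fun s => hf s ▸ Real.sqrt_pos.2 (hpos s)
  have cf : ContDiff ℝ (⊤ : ℕ∞) f :=
    funext hf ▸ ((cκ.pow 2).add (cτ.pow 2)).sqrt fun s => (hpos s).ne'
  have cg : ContDiff ℝ (⊤ : ℕ∞) g :=
    funext hg ▸ ((cκ.pow 2).div ((cκ.pow 2).add (cτ.pow 2)) fun s => (hpos s).ne').mul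
      (contDiff_infty_iff_deriv.1 (cτ.div cκ fun s => (hκpos s).ne')).2
  have dα : ∀ s, HasDerivAt α (T s) s := fun s =>
    hT s ▸ ((contDiff_infty_iff_deriv.1 hα).1 s).hasDerivAt
  have dT : ∀ s, HasDerivAt T (κ s • N s) s := fun s => by
    have h := ((contDiff_infty_iff_deriv.1 cT).1 s).hasDerivAt
    rwa [hN, smul_inv_smul₀ (hκpos s).ne', ← hT']
  have dN : ∀ s, HasDerivAt N (deriv N s) s := fun s =>
    ((contDiff_infty_iff_deriv.1 cN).1 s).hasDerivAt
  have hTT : ∀ s, ⟪T s, T s⟫ = 1 := fun s => by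
    rw [real_inner_self_eq_norm_sq, hT, hunit, one_pow]
  have hNN : ∀ s, ⟪N s, N s⟫ = 1 := fun s => by
    rw [real_inner_self_eq_norm_sq, hN, norm_smul, ← hκ, norm_inv, Real.norm_of_nonneg
      (hκpos s).le, inv_mul_cancel₀ (hκpos s).ne', one_pow]
  have hTN : ∀ s, ⟪T s, N s⟫ = 0 := fun s => by
    have h := inner_deriv_add_inner_deriv_eq_zero (dT s) (dT s) hTT
    rw [real_inner_smul_left, real_inner_smul_right, real_inner_comm] at h
    have : κ s * ⟪N s, T s⟫ = 0 := by rw [real_inner_comm] at *; linarith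
    rw [real_inner_comm]
    exact (mul_eq_zero.1 this).resolve_left (hκpos s).ne'
  have hN' : ∀ s, deriv N s = (-κ s) • T s + τ s • B s := fun s => by
    have h1 := inner_deriv_add_inner_deriv_eq_zero (dT s) (dN s) hTN
    have h2 := inner_deriv_add_inner_deriv_eq_zero (dN s) (dN s) hNN
    rw [real_inner_smul_left, hNN] at h1
    rw [real_inner_comm (N s) (deriv N s)] at h2
    have h3 : ⟪N s, deriv N s⟫ = 0 := by rw [real_inner_comm] at *; linarith
    have h := eq_sum_inner_frame (hTT s) (hNN s) (hTN s) (deriv N s)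
    rw [← hB, real_inner_comm (deriv N s) (B s), ← hτ, h3,
      show ⟪T s, deriv N s⟫ = -κ s by linarith, zero_smul, add_zero] at h
    exact h
  have dB : ∀ s, HasDerivAt B ((-τ s) • N s) s := fun s => by
    have h := (dT s).cross3 (dN s)
    rwa [hN', hB, cross3_frenet (hTT s) (hTN s), ← funext hB] at h
  have hC' : C = fun s => (-Real.cos (θ s)) • T s + Real.sin (θ s) • B s := by
    funext s
    have h := (hfpos s).ne'
    rw [hC, ← hf, hθκ, hθτ]
    match_scalars <;> field_simp
  have hW' : W = fun s => Real.sin (θ s) • T s + Real.cos (θ s) • B s := by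
    funext s
    have h := (hfpos s).ne'
    rw [hW, ← hf, hθκ, hθτ]
    match_scalars <;> field_simp
  have dθ : ∀ s, HasDerivAt θ (g s) s := fun s => hθderiv s ▸ (hθdiff s).hasDerivAt
  have dC : ∀ s, HasDerivAt C ((-f s) • N s + g s • W s) s := fun s => by
    have h := ((dθ s).cos.neg.smul (dT s)).add ((dθ s).sin.smul (dB s))
    rw [hC']
    refine h.congr_deriv ?_
    rw [hW', hθκ, hθτ]
    simp only [Pi.neg_apply]
    match_scalars
    · linear_combination (-f s) * Real.sin_sq_add_cos_sq (θ s)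
    · ring
    · ring
  have dW : ∀ s, HasDerivAt W ((-g s) • C s) s := fun s => by
    have h := ((dθ s).sin.smul (dT s)).add ((dθ s).cos.smul (dB s))
    rw [hW']
    refine h.congr_deriv ?_
    rw [hC', hθκ, hθτ]
    match_scalars <;> ring
  have hNC : ∀ s, deriv N s = f s • C s := fun s => by
    rw [hN', hC', hθκ, hθτ]
    match_scalars <;> ring
  intro s v
  constructor
  · have hφs' : (fun u => φs u v) = fun u => T u + v • ((-f u) • N u + g u • W u) := by
      funext u
      rw [hφs]
      exact ((dα u).add ((dC u).const_smul v)).deriv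
    have df := ((contDiff_infty_iff_deriv.1 cf).1 s).hasDerivAt
    have dg := ((contDiff_infty_iff_deriv.1 cg).1 s).hasDerivAt
    have h := (dT s).add (((df.neg.smul (dN s)).add (dg.smul (dW s))).const_smul v)
    rw [hφss, hφs']
    refine h.deriv.trans ?_
    rw [hNC, ← hθκ]
    simp only [Pi.neg_apply]
    match_scalars <;> ring
  · have hφv' : (fun u => φv u v) = C := by
      funext u
      rw [hφv]
      simpa using (((hasDerivAt_id v).smul_const (C u)).const_add (α u)).deriv
    rw [hφsv, hφv', (dC s).deriv]
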